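/- Let G be a finitely generated virtually abelian group and let S be a finite set generating G as a monoid with weight function ω : S → ℕ₊. Then the standard weighted growth series of G, namely ∑_{n≥0} #{g ∈ G : ω(g) = n} zⁿ, is a rational power series. -/

import Mathlib

/-- The weight of a group element `g` with respect to a generating set `S` and a
weight function `ω`: the minimal total weight among all words over `S` representing `g`. -/
noncomputable def wordWeight {G : Type*} [Group G] (S : Set G) (ω : G → ℕ) (g : G) : ℕ :=
  sInf {n | ∃ l : List G, (∀ x ∈ l, x ∈ S) ∧ l.prod = g ∧ (l.map ω).sum = n}

/-- A formal power series with integer coefficients is rational if it is the quotient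
of two integer polynomials. -/
def IsRationalSeries (f : PowerSeries ℤ) : Prop :=
  ∃ p q : Polynomial ℤ, q ≠ 0 ∧ f * (q : PowerSeries ℤ) = (p : PowerSeries ℤ)

/-!
Let `H` be a commutative subgroup of finite index in `G`. Reading a word letter by letter traces a
path in the Schreier graph of `G ⧸ H`; labelling the edges by an `H`-valued cocycle and the weight
of the letter, the element represented by the word is determined by the end points of the path and
the sum of its labels in `H × ℕ`. By Kleene's elimination of vertices, the labels of the paths
between two given vertices form a semilinear set, and so do the pairs `(h, n)` with `n` least for
the given `h`, because semilinear sets are closed under difference.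

It remains to see that a semilinear set has a rational series as soon as it has finitely many
elements of each degree. It is a finite union of sets `a + P` with `P` a free submonoid whose
nonzero elements have positive degree. The sets `A + P`, with `A` finite and `P` finitely generated
with nonzero elements of positive degree, are closed under intersection, so by inclusion-exclusion
it suffices to treat one of them. Adding one `a ∈ A` at a time, and writing the new elements of
`a + P` in the generators of `P` in the lexicographically least way, one has to count the complement
of an upper set in `ℕⁿ`. By Dickson's lemma, an upper set is a finite union of cones `{x | u ≤ x}`.
-/

namespace IsRationalSeries

variable {f g : PowerSeries ℤ}

theorem coe (p : Polynomial ℤ) : IsRationalSeries (p : PowerSeries ℤ) :=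
  ⟨p, 1, one_ne_zero, by simp⟩

theorem sub (hf : IsRationalSeries f) (hg : IsRationalSeries g) : IsRationalSeries (f - g) := by
  obtain ⟨p, q, hq, hpq⟩ := hf
  obtain ⟨p', q', hq', hpq'⟩ := hg
  refine ⟨p * q' - p' * q, q * q', mul_ne_zero hq hq', ?_⟩
  push_cast
  rw [← hpq, ← hpq']
  ring

theorem add (hf : IsRationalSeries f) (hg : IsRationalSeries g) : IsRationalSeries (f + g) := by
  obtain ⟨p, q, hq, hpq⟩ := hf
  obtain ⟨p', q', hq', hpq'⟩ := hg
  refine ⟨p * q' + p' * q, q * q', mul_ne_zero hq hq', ?_⟩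
  push_cast
  rw [← hpq, ← hpq']
  ring

theorem coe_mul_iff {r : Polynomial ℤ} (hr : r ≠ 0) :
    IsRationalSeries ((r : PowerSeries ℤ) * f) ↔ IsRationalSeries f := by
  refine ⟨fun ⟨p, q, hq, hpq⟩ => ⟨p, r * q, mul_ne_zero hr hq, ?_⟩,
    fun ⟨p, q, hq, hpq⟩ => ⟨r * p, q, hq, ?_⟩⟩
  all_goals
    push_cast
    rw [← hpq]
    ring

end IsRationalSeries

/-! ### Weighted generating series of sets -/

/-- The generating series `∑ₖ #{x ∈ X | deg x = k} zᵏ` of a set `X` graded by `deg`. It is only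
meaningful when all these fibres are finite, since `Set.ncard` sends infinite sets to `0`. -/
noncomputable def weightSeries {B : Type*} (deg : B → ℕ) (X : Set B) : PowerSeries ℤ :=
  PowerSeries.mk fun k => ((X ∩ deg ⁻¹' {k}).ncard : ℤ)

/-- A set with finitely many elements of each degree, whose generating series is rational. -/
structure HasRationalSeries {B : Type*} (deg : B → ℕ) (X : Set B) : Prop where
  finite_fiber : ∀ k, (X ∩ deg ⁻¹' {k}).Finite
  isRationalSeries : IsRationalSeries (weightSeries deg X)

section WeightSeries

variable {B C ι : Type*} {deg : B → ℕ} {deg' : C → ℕ} {X Y : Set B}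

theorem coeff_weightSeries (deg : B → ℕ) (X : Set B) (k : ℕ) :
    (weightSeries deg X).coeff k = (X ∩ deg ⁻¹' {k}).ncard :=
  PowerSeries.coeff_mk _ _

theorem weightSeries_empty : weightSeries deg ∅ = 0 := by
  ext k
  simp [coeff_weightSeries]

theorem weightSeries_singleton (x : B) : weightSeries deg {x} = PowerSeries.X ^ deg x := by
  ext k
  rw [coeff_weightSeries, PowerSeries.coeff_X_pow]
  split_ifs with hk
  · rw [Set.inter_eq_left.2 (by simp [hk]), Set.ncard_singleton, Nat.cast_one]
  · rw [Set.singleton_inter_eq_empty.2 (by simpa using Ne.symm hk), Set.ncard_empty, Nat.cast_zero]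

theorem weightSeries_union_add_inter (hX : ∀ k, (X ∩ deg ⁻¹' {k}).Finite)
    (hY : ∀ k, (Y ∩ deg ⁻¹' {k}).Finite) :
    weightSeries deg (X ∪ Y) + weightSeries deg (X ∩ Y) =
      weightSeries deg X + weightSeries deg Y := by
  ext k
  simp only [map_add, coeff_weightSeries, Set.union_inter_distrib_right,
    Set.inter_inter_distrib_right X Y]
  exact_mod_cast Set.ncard_union_add_ncard_inter _ _ (hX k) (hY k)

theorem weightSeries_sdiff (hX : ∀ k, (X ∩ deg ⁻¹' {k}).Finite) (hYX : Y ⊆ X) :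
    weightSeries deg (X \ Y) = weightSeries deg X - weightSeries deg Y := by
  have h := weightSeries_union_add_inter (deg := deg) (X := X \ Y) (Y := Y)
    (fun k => (hX k).subset (Set.inter_subset_inter_left _ Set.sdiff_subset))
    (fun k => (hX k).subset (Set.inter_subset_inter_left _ hYX))
  rw [Set.sdiff_union_of_subset hYX, Set.sdiff_inter_self, weightSeries_empty, add_zero] at h
  exact eq_sub_of_add_eq h.symm

theorem image_inter_fiber {f : B → C} {d : ℕ} (hd : ∀ x ∈ X, deg' (f x) = deg x + d) (k : ℕ) :
    f '' X ∩ deg' ⁻¹' {k + d} = f '' (X ∩ deg ⁻¹' {k}) := by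
  ext y
  constructor
  · rintro ⟨⟨x, hx, rfl⟩, hk⟩
    exact ⟨x, ⟨hx, Nat.add_right_cancel ((hd x hx).symm.trans hk)⟩, rfl⟩
  · rintro ⟨x, ⟨hx, rfl⟩, rfl⟩
    exact ⟨⟨x, hx, rfl⟩, hd x hx⟩

theorem image_inter_fiber_of_lt {f : B → C} {d k : ℕ} (hd : ∀ x ∈ X, deg' (f x) = deg x + d)
    (hk : k < d) : f '' X ∩ deg' ⁻¹' {k} = ∅ := by
  rw [Set.eq_empty_iff_forall_notMem]
  rintro _ ⟨⟨x, hx, rfl⟩, rfl⟩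
  exact absurd hk (by rw [hd x hx]; exact not_lt.2 (Nat.le_add_left _ _))

theorem weightSeries_image {f : B → C} {d : ℕ} (hf : Set.InjOn f X)
    (hd : ∀ x ∈ X, deg' (f x) = deg x + d) :
    weightSeries deg' (f '' X) = PowerSeries.X ^ d * weightSeries deg X := by
  ext k
  rw [PowerSeries.coeff_X_pow_mul', coeff_weightSeries]
  split_ifs with h
  · obtain ⟨k, rfl⟩ := Nat.exists_eq_add_of_le' h
    rw [image_inter_fiber hd, (hf.mono Set.inter_subset_left).ncard_image, Nat.add_sub_cancel,
      coeff_weightSeries]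
  · rw [image_inter_fiber_of_lt hd (not_le.1 h), Set.ncard_empty, Nat.cast_zero]

namespace HasRationalSeries

theorem empty : HasRationalSeries deg ∅ :=
  ⟨by simp, by simpa [weightSeries_empty] using IsRationalSeries.coe 0⟩

theorem singleton (x : B) : HasRationalSeries deg {x} :=
  ⟨fun _ => (Set.finite_singleton x).inter_of_left _, by
    simpa [weightSeries_singleton] using IsRationalSeries.coe (Polynomial.X ^ deg x)⟩

theorem union (hX : HasRationalSeries deg X) (hY : HasRationalSeries deg Y)
    (hXY : HasRationalSeries deg (X ∩ Y)) : HasRationalSeries deg (X ∪ Y) where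
  finite_fiber k := by
    rw [Set.union_inter_distrib_right]
    exact (hX.finite_fiber k).union (hY.finite_fiber k)
  isRationalSeries := by
    rw [eq_sub_of_add_eq (weightSeries_union_add_inter hX.finite_fiber hY.finite_fiber)]
    exact (hX.isRationalSeries.add hY.isRationalSeries).sub hXY.isRationalSeries

theorem union_sdiff (hX : HasRationalSeries deg X) (hYX : HasRationalSeries deg (Y \ X)) :
    HasRationalSeries deg (X ∪ Y) := by
  rw [← Set.union_sdiff_self]
  exact hX.union hYX (by rw [Set.inter_sdiff_self]; exact empty)

theorem sdiff (hX : HasRationalSeries deg X) (hY : HasRationalSeries deg Y) (hYX : Y ⊆ X) :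
    HasRationalSeries deg (X \ Y) where
  finite_fiber k := (hX.finite_fiber k).subset (Set.inter_subset_inter_left _ Set.sdiff_subset)
  isRationalSeries := by
    rw [weightSeries_sdiff hX.finite_fiber hYX]
    exact hX.isRationalSeries.sub hY.isRationalSeries

theorem image {f : B → C} {d : ℕ} (hX : HasRationalSeries deg X) (hf : Set.InjOn f X)
    (hd : ∀ x ∈ X, deg' (f x) = deg x + d) : HasRationalSeries deg' (f '' X) where
  finite_fiber k := by
    rcases lt_or_ge k d with hk | hk
    · rw [image_inter_fiber_of_lt hd hk]
      exact Set.finite_empty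
    · obtain ⟨k, rfl⟩ := Nat.exists_eq_add_of_le' hk
      rw [image_inter_fiber hd]
      exact (hX.finite_fiber k).image f
  isRationalSeries := by
    rw [weightSeries_image hf hd]
    simpa using (IsRationalSeries.coe_mul_iff (pow_ne_zero d Polynomial.X_ne_zero)).2
      hX.isRationalSeries

theorem biUnion_of_inter_mem {S : Set (Set B)} (hS : ∀ X ∈ S, HasRationalSeries deg X)
    (hinter : ∀ X ∈ S, ∀ Y ∈ S, X ∩ Y ∈ S) {t : Set ι} (ht : t.Finite) {Z : ι → Set B}
    (hZ : ∀ i ∈ t, Z i ∈ S) : HasRationalSeries deg (⋃ i ∈ t, Z i) := by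
  induction t, ht using Set.Finite.induction_on generalizing Z with
  | empty => simpa using empty
  | @insert a t _ _ ih =>
    have hZa : Z a ∈ S := hZ a (Set.mem_insert a t)
    have hZt : ∀ i ∈ t, Z i ∈ S := fun i hi => hZ i (Set.mem_insert_of_mem a hi)
    rw [Set.biUnion_insert]
    refine (hS _ hZa).union (ih hZt) ?_
    rw [Set.inter_iUnion₂]
    exact ih fun i hi => hinter _ hZa _ (hZt i hi)

theorem iUnion [Finite ι] {Z : ι → Set B} (hZ : ∀ i, HasRationalSeries deg (Z i))
    (hdisj : Pairwise (Function.onFun Disjoint Z)) : HasRationalSeries deg (⋃ i, Z i) := by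
  rw [← Set.biUnion_univ]
  refine biUnion_of_inter_mem (S := insert ∅ (Set.range Z)) ?_ ?_ Set.finite_univ (by simp)
  · rintro _ (rfl | ⟨i, rfl⟩)
    exacts [empty, hZ i]
  · rintro _ (rfl | ⟨i, rfl⟩) _ (rfl | ⟨j, rfl⟩)
    · simp
    · simp
    · simp
    · obtain rfl | hij := eq_or_ne i j
      · simp
      · exact Or.inl (hdisj hij).inter_eq

theorem of_sdiff_image {f : B → B} {d : ℕ} (hd : 0 < d) (hf : Set.InjOn f X)
    (hfX : Set.MapsTo f X X) (hdeg : ∀ x ∈ X, deg (f x) = deg x + d)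
    (hfin : ∀ k, (X ∩ deg ⁻¹' {k}).Finite) (h : HasRationalSeries deg (X \ f '' X)) :
    HasRationalSeries deg X where
  finite_fiber := hfin
  isRationalSeries := by
    have hne : (1 - Polynomial.X ^ d : Polynomial ℤ) ≠ 0 := fun h0 => by
      simpa [hd.ne'] using congrArg (Polynomial.eval 0) h0
    rw [← IsRationalSeries.coe_mul_iff hne]
    convert h.isRationalSeries using 1
    rw [weightSeries_sdiff hfin hfX.image_subset, weightSeries_image hf hdeg]
    push_cast
    ring

end HasRationalSeries

end WeightSeries

/-! ### Monotone sets of exponent vectors -/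

section Dickson

theorem exists_finite_subset_forall_le {W : Type*} [PartialOrder W] [WellQuasiOrderedLE W]
    (U : Set W) : ∃ F ⊆ U, F.Finite ∧ ∀ x ∈ U, ∃ u ∈ F, u ≤ x := by
  have := WellQuasiOrderedLE.to_wellFoundedLT (α := W)
  refine ⟨{x | Minimal (· ∈ U) x}, setOfPred_minimal_subset U,
    WellQuasiOrderedLE.finite_of_isAntichain (setOfPred_minimal_antichain _), fun x hx => ?_⟩
  obtain ⟨u, hux, hu⟩ := exists_minimal_le_of_wellFoundedLT (· ∈ U) x hx
  exact ⟨u, hu, hux⟩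

variable {σ : Type*} [DecidableEq σ] {deg : (σ → ℕ) →+ ℕ}

theorem piSingle_le_iff {x : σ → ℕ} {i : σ} {n : ℕ} : Pi.single i n ≤ x ↔ n ≤ x i := by
  rw [Pi.single, update_le_iff]
  exact and_iff_left fun j _ => Nat.zero_le _

theorem apply_le_of_pos_single (hdeg : ∀ i, 0 < deg (Pi.single i 1)) (x : σ → ℕ) (i : σ) :
    x i ≤ deg x := by
  have hle : x i • Pi.single i 1 ≤ x := by
    rw [← Pi.single_smul, smul_eq_mul, mul_one, piSingle_le_iff]
  obtain ⟨y, hy⟩ := exists_add_of_le hle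
  calc x i ≤ x i * deg (Pi.single i 1) := Nat.le_mul_of_pos_right _ (hdeg i)
    _ ≤ x i * deg (Pi.single i 1) + deg y := Nat.le_add_right _ _
    _ = deg (x i • Pi.single i 1 + y) := by rw [map_add, map_nsmul, smul_eq_mul]
    _ = deg x := by rw [← hy]

theorem mem_image_add_single_iff {s : Set σ} {i : σ} {x : σ → ℕ} :
    x ∈ (· + Pi.single i 1) '' {y | Function.support y ⊆ insert i s} ↔
      Function.support x ⊆ insert i s ∧ x i ≠ 0 := by
  constructor
  · rintro ⟨y, hy, rfl⟩
    refine ⟨fun j hj => ?_, by simp⟩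
    by_cases hji : j = i
    · exact Or.inl hji
    · exact hy (by simpa [hji] using hj)
  · rintro ⟨hx, hxi⟩
    exact ⟨x - Pi.single i 1, fun j hj => hx fun h0 => hj (by simp [h0]),
      tsub_add_cancel_of_le (piSingle_le_iff.2 (Nat.one_le_iff_ne_zero.2 hxi))⟩

variable [Finite σ]

theorem finite_inter_fiber_of_pos_single (hdeg : ∀ i, 0 < deg (Pi.single i 1))
    (X : Set (σ → ℕ)) (k : ℕ) : (X ∩ deg ⁻¹' {k}).Finite := by
  refine (Set.Finite.pi' fun _ => Set.finite_Iic k).subset ?_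
  rintro x ⟨-, rfl⟩ i
  exact apply_le_of_pos_single hdeg x i

theorem hasRationalSeries_setOf_support_subset (hdeg : ∀ i, 0 < deg (Pi.single i 1)) (s : Set σ) :
    HasRationalSeries deg {x : σ → ℕ | Function.support x ⊆ s} := by
  induction s, s.toFinite using Set.Finite.induction_on with
  | empty => simpa using HasRationalSeries.singleton (deg := deg) 0
  | @insert i s hi _ ih =>
    refine HasRationalSeries.of_sdiff_image (f := (· + Pi.single i 1)) (hdeg i)
      (add_left_injective _).injOn ?_ (fun x _ => map_add deg _ _)
      (finite_inter_fiber_of_pos_single hdeg _) ?_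
    · exact fun x hx => (mem_image_add_single_iff.1 ⟨x, hx, rfl⟩).1
    · convert ih using 1
      ext x
      simp only [Set.mem_sdiff, mem_image_add_single_iff, Set.mem_ofPred_eq]
      constructor
      · rintro ⟨hx, hxi⟩ j hj
        exact (hx hj).resolve_left (by rintro rfl; exact hxi ⟨hx, hj⟩)
      · exact fun hx => ⟨hx.trans (Set.subset_insert i s), fun h => hi (hx h.2)⟩

theorem hasRationalSeries_Ici (hdeg : ∀ i, 0 < deg (Pi.single i 1)) (u : σ → ℕ) :
    HasRationalSeries deg (Set.Ici u) := by
  have h := hasRationalSeries_setOf_support_subset hdeg Set.univ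
  simp only [Set.subset_univ, Set.ofPred_true] at h
  convert h.image (add_left_injective u).injOn (fun x _ => map_add deg x u) using 1
  ext x
  simp [le_iff_exists_add', eq_comm]

theorem hasRationalSeries_of_isUpperSet {U : Set (σ → ℕ)} (hU : IsUpperSet U)
    (hdeg : ∀ i, 0 < deg (Pi.single i 1)) : HasRationalSeries deg U := by
  obtain ⟨F, hFU, hF, hUF⟩ := exists_finite_subset_forall_le U
  have hU' : U = ⋃ u ∈ F, Set.Ici u := by
    ext x
    simp only [Set.mem_iUnion, Set.mem_Ici, exists_prop]
    exact ⟨hUF x, fun ⟨u, hu, hux⟩ => hU hux (hFU hu)⟩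
  rw [hU']
  refine HasRationalSeries.biUnion_of_inter_mem (S := Set.range Set.Ici) ?_ ?_ hF (by simp)
  · rintro _ ⟨u, rfl⟩
    exact hasRationalSeries_Ici hdeg u
  · rintro _ ⟨u, rfl⟩ _ ⟨v, rfl⟩
    exact ⟨u ⊔ v, Set.Ici_inter_Ici.symm⟩

theorem hasRationalSeries_of_isLowerSet {L : Set (σ → ℕ)} (hL : IsLowerSet L)
    (hdeg : ∀ i, 0 < deg (Pi.single i 1)) : HasRationalSeries deg L := by
  have h := (hasRationalSeries_of_isUpperSet isUpperSet_univ hdeg).sdiff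
    (hasRationalSeries_of_isUpperSet hL.compl hdeg) (Set.subset_univ _)
  rwa [← Set.compl_eq_univ_sdiff, compl_compl] at h

end Dickson

/-! ### Semilinear sets have rational series -/

section NormalForm

variable {M : Type*} {n : ℕ}

/-- The canonical representatives for a parametrization `φ` by exponent vectors: those that are
lexicographically smallest in their fibre. -/
def lexNormalForms (φ : (Fin n → ℕ) → M) : Set (Fin n → ℕ) :=
  {x | ∀ y, φ y = φ x → toLex x ≤ toLex y}

theorem injOn_lexNormalForms (φ : (Fin n → ℕ) → M) : Set.InjOn φ (lexNormalForms φ) :=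
  fun x hx y hy hxy => toLex.injective (le_antisymm (hx y hxy.symm) (hy x hxy))

theorem exists_mem_lexNormalForms (φ : (Fin n → ℕ) → M) (x : Fin n → ℕ) :
    ∃ y ∈ lexNormalForms φ, φ y = φ x := by
  obtain ⟨y, hy⟩ := exists_minimal_of_wellFoundedLT
    (fun y : Lex (Fin n → ℕ) => φ (ofLex y) = φ x) ⟨toLex x, rfl⟩
  exact ⟨ofLex y, fun z hz => (le_total y (toLex z)).elim id (hy.2 (hz.trans hy.1)), hy.1⟩

theorem isLowerSet_lexNormalForms [AddMonoid M] (φ : (Fin n → ℕ) →+ M) :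
    IsLowerSet (lexNormalForms φ) := by
  intro x y hyx hx z hz
  obtain ⟨c, rfl⟩ := exists_add_of_le hyx
  have h : toLex (y + c) ≤ toLex (z + c) := hx (z + c) (by rw [map_add, map_add, hz])
  simpa only [toLex_add, add_le_add_iff_right] using h

end NormalForm

section Semilinear

open Pointwise

variable {M : Type*} [AddCommMonoid M] {deg : M →+ ℕ}

theorem exists_fin_addMonoidHom_of_pos {P : AddSubmonoid M} (hP : P.FG)
    (hdeg : ∀ m ∈ P, deg m = 0 → m = 0) :
    ∃ (n : ℕ) (φ : (Fin n → ℕ) →+ M), AddMonoidHom.mrange φ = P ∧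
      ∀ i, 0 < deg.comp φ (Pi.single i 1) := by
  classical
  obtain ⟨T, rfl⟩ := hP
  let t (i : Fin (T.erase 0).card) : M := (T.erase 0).equivFin.symm i
  refine ⟨_, (Fintype.linearCombination ℕ t).toAddMonoidHom, ?_, fun i => ?_⟩
  · have ht : Set.range t = (T : Set M) \ {0} := by
      rw [← Finset.coe_erase]
      exact ((T.erase 0).equivFin.symm.surjective.range_comp _).trans Subtype.range_coe
    rw [← AddSubmonoid.closure_sdiff_singleton_zero, ← ht]
    ext m
    simp [AddSubmonoid.mem_closure_range_iff_of_fintype, Fintype.linearCombination_apply, eq_comm]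
  · have hi : t i ∈ T.erase 0 := ((T.erase 0).equivFin.symm i).2
    have hti : (Fintype.linearCombination ℕ t).toAddMonoidHom (Pi.single i 1) = t i := by simp
    rw [AddMonoidHom.comp_apply, hti, Nat.pos_iff_ne_zero]
    exact fun h0 => Finset.ne_of_mem_erase hi
      (hdeg _ (AddSubmonoid.subset_closure (Finset.mem_of_mem_erase hi)) h0)

theorem hasRationalSeries_vadd_sdiff [IsCancelAdd M] {P : AddSubmonoid M} (hP : P.FG)
    (hdeg : ∀ m ∈ P, deg m = 0 → m = 0) (a : M) {U : Set M} (hU : U + P ⊆ U) :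
    HasRationalSeries deg ((a +ᵥ (P : Set M)) \ U) := by
  obtain ⟨n, φ, rfl, hφ⟩ := exists_fin_addMonoidHom_of_pos hP hdeg
  have hlower : IsLowerSet (lexNormalForms φ ∩ {x | a + φ x ∉ U}) := by
    refine (isLowerSet_lexNormalForms φ).inter fun x y hyx hx hy => hx ?_
    obtain ⟨c, rfl⟩ := exists_add_of_le hyx
    rw [map_add, ← add_assoc]
    exact hU (Set.add_mem_add hy ⟨c, rfl⟩)
  convert (hasRationalSeries_of_isLowerSet hlower hφ).image (f := fun x => a + φ x)
    (deg' := deg) (d := deg a) ?_ ?_ using 1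
  · ext m
    constructor
    · rintro ⟨⟨_, ⟨x, rfl⟩, rfl⟩, hm⟩
      obtain ⟨y, hy, hyx⟩ := exists_mem_lexNormalForms φ x
      exact ⟨y, ⟨hy, by simpa [hyx] using hm⟩, by simp [hyx]⟩
    · rintro ⟨x, ⟨-, hx⟩, rfl⟩
      exact ⟨⟨φ x, ⟨x, rfl⟩, rfl⟩, hx⟩
  · exact fun x hx y hy hxy => injOn_lexNormalForms φ hx.1 hy.1 (add_left_cancel hxy)
  · intro x _
    rw [map_add, add_comm, AddMonoidHom.comp_apply]

theorem hasRationalSeries_finite_add [IsCancelAdd M] {A : Set M} (hA : A.Finite)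
    {P : AddSubmonoid M} (hP : P.FG) (hdeg : ∀ m ∈ P, deg m = 0 → m = 0) :
    HasRationalSeries deg (A + P) := by
  induction A, hA using Set.Finite.induction_on with
  | empty => simpa using HasRationalSeries.empty
  | @insert a A _ _ ih =>
    have hPP : A + (P : Set M) + P = A + P := by rw [add_assoc, AddSubmonoid.coe_add_self_eq]
    rw [Set.insert_eq, Set.union_add, Set.union_comm, Set.singleton_add]
    exact ih.union_sdiff (hasRationalSeries_vadd_sdiff hP hdeg a hPP.subset)

theorem addSubmonoid_fg_inf [IsCancelAdd M] {P Q : AddSubmonoid M} (hP : P.FG) (hQ : Q.FG) :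
    (P ⊓ Q).FG := by
  obtain ⟨r, φ, rfl⟩ := AddSubmonoid.fg_iff_exists_fin_addMonoidHom.1 hP
  obtain ⟨s, ψ, rfl⟩ := AddSubmonoid.fg_iff_exists_fin_addMonoidHom.1 hQ
  let f : (Fin r → ℕ) × (Fin s → ℕ) →+ M := φ.comp (AddMonoidHom.fst _ _)
  let g : (Fin r → ℕ) × (Fin s → ℕ) →+ M := ψ.comp (AddMonoidHom.snd _ _)
  convert (AddSubmonoid.fg_eqLocusM f g).map f using 1
  ext m
  constructor
  · rintro ⟨⟨x, hx⟩, ⟨y, hy⟩⟩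
    exact ⟨(x, y), hx.trans hy.symm, hx⟩
  · rintro ⟨z, hz, rfl⟩
    exact ⟨⟨z.1, rfl⟩, ⟨z.2, (show f z = g z from hz).symm⟩⟩

theorem exists_finite_vadd_inter_vadd [IsCancelAdd M] {P Q : AddSubmonoid M} (hP : P.FG)
    (hQ : Q.FG) (a b : M) :
    ∃ F : Set M, F.Finite ∧
      (a +ᵥ (P : Set M)) ∩ (b +ᵥ (Q : Set M)) = F + (P ⊓ Q : AddSubmonoid M) := by
  obtain ⟨r, φ, rfl⟩ := AddSubmonoid.fg_iff_exists_fin_addMonoidHom.1 hP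
  obtain ⟨s, ψ, rfl⟩ := AddSubmonoid.fg_iff_exists_fin_addMonoidHom.1 hQ
  obtain ⟨F, hFsub, hF, hmin⟩ := exists_finite_subset_forall_le
    {z : (Fin r → ℕ) × (Fin s → ℕ) | a + φ z.1 = b + ψ z.2}
  refine ⟨(fun z => a + φ z.1) '' F, hF.image _, ?_⟩
  ext m
  constructor
  · rintro ⟨⟨_, ⟨x, rfl⟩, rfl⟩, ⟨_, ⟨y, rfl⟩, hxy⟩⟩
    obtain ⟨z, hz, hle⟩ := hmin (x, y) hxy.symm
    obtain ⟨⟨u, v⟩, huv⟩ := exists_add_of_le hle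
    obtain ⟨rfl, rfl⟩ := Prod.mk.inj huv
    have hzF : a + φ z.1 = b + ψ z.2 := hFsub hz
    have huv : φ u = ψ v := by
      simpa [← add_assoc, ← hzF] using hxy.symm
    exact ⟨_, ⟨z, hz, rfl⟩, φ u, ⟨⟨u, rfl⟩, ⟨v, huv.symm⟩⟩, by simp [add_assoc]⟩
  · rintro ⟨_, ⟨z, hz, rfl⟩, _, ⟨⟨u, rfl⟩, ⟨v, hv⟩⟩, rfl⟩
    have hzF : a + φ z.1 = b + ψ z.2 := hFsub hz
    exact ⟨⟨φ (z.1 + u), ⟨_, rfl⟩, by simp [add_assoc]⟩,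
      ⟨ψ (z.2 + v), ⟨_, rfl⟩, by simp [hzF, hv, add_assoc]⟩⟩

/-- A finite union of cosets `a + P` of one finitely generated submonoid `P` whose nonzero
elements have positive degree. The class of these sets is closed under intersection, which is what
inclusion-exclusion needs. -/
def IsPositiveCosetUnion (deg : M →+ ℕ) (X : Set M) : Prop :=
  ∃ (A : Set M) (P : AddSubmonoid M),
    A.Finite ∧ P.FG ∧ (∀ m ∈ P, deg m = 0 → m = 0) ∧ X = A + P

theorem IsPositiveCosetUnion.inter [IsCancelAdd M] {X Y : Set M}
    (hX : IsPositiveCosetUnion deg X) (hY : IsPositiveCosetUnion deg Y) :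
    IsPositiveCosetUnion deg (X ∩ Y) := by
  obtain ⟨A, P, hA, hP, hdeg, rfl⟩ := hX
  obtain ⟨B, Q, hB, hQ, -, rfl⟩ := hY
  choose F hF hFeq using exists_finite_vadd_inter_vadd hP hQ
  refine ⟨⋃ p ∈ A ×ˢ B, F p.1 p.2, P ⊓ Q, (hA.prod hB).biUnion fun p _ => hF _ _,
    addSubmonoid_fg_inf hP hQ, fun m hm => hdeg m hm.1, ?_⟩
  simp only [Set.iUnion₂_add, ← hFeq]
  ext m
  simp only [Set.mem_inter_iff, Set.mem_iUnion, Set.mem_prod, Set.mem_add, Set.mem_vadd_set,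
    vadd_eq_add, exists_prop, Prod.exists]
  exact ⟨fun ⟨⟨a, ha, hma⟩, ⟨b, hb, hmb⟩⟩ => ⟨a, b, ⟨ha, hb⟩, hma, hmb⟩,
    fun ⟨a, b, ⟨ha, hb⟩, hma, hmb⟩ => ⟨⟨a, ha, hma⟩, ⟨b, hb, hmb⟩⟩⟩

theorem nsmul_left_injective_of_mem_closure {t : Set M} (ht : LinearIndepOn ℕ id t) {m : M}
    (hm : m ∈ AddSubmonoid.closure t) (hm0 : m ≠ 0) :
    Function.Injective fun n : ℕ => n • m := by
  rw [← Submodule.span_nat_eq_addSubmonoidClosure, Submodule.mem_toAddSubmonoid,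
    Finsupp.mem_span_iff_linearCombination] at hm
  obtain ⟨c, rfl⟩ := hm
  have hc0 : c ≠ 0 := fun h0 => hm0 (by rw [h0, map_zero])
  obtain ⟨i, hi⟩ := DFunLike.ne_iff.1 hc0
  have hinj : Function.Injective (Finsupp.linearCombination ℕ ((↑) : t → M)) := ht
  intro n k hnk
  have hc : n • c = k • c := hinj (by simpa only [map_nsmul] using hnk)
  exact Nat.eq_of_mul_eq_mul_right (Nat.pos_of_ne_zero hi) (DFunLike.congr_fun hc i)

theorem eq_zero_of_finite_inter_fiber [IsLeftCancelAdd M] {t : Set M} (ht : LinearIndepOn ℕ id t)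
    {a m : M} (hfin : ((a +ᵥ (AddSubmonoid.closure t : Set M)) ∩ deg ⁻¹' {deg a}).Finite)
    (hm : m ∈ AddSubmonoid.closure t) (hdeg : deg m = 0) : m = 0 := by
  by_contra hm0
  have hinj : Function.Injective fun n : ℕ => a + n • m :=
    (add_right_injective a).comp (nsmul_left_injective_of_mem_closure ht hm hm0)
  refine Set.infinite_of_injective_forall_mem hinj (fun n => ?_) hfin
  exact ⟨⟨n • m, nsmul_mem hm n, rfl⟩, by simp [hdeg]⟩

theorem hasRationalSeries_of_isSemilinearSet [IsCancelAdd M] {X : Set M} (hX : IsSemilinearSet X)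
    (hfin : ∀ k, (X ∩ deg ⁻¹' {k}).Finite) : HasRationalSeries deg X := by
  obtain ⟨S, hS, hlin, rfl⟩ := hX.isProperSemilinearSet
  rw [Set.sUnion_eq_biUnion]
  refine HasRationalSeries.biUnion_of_inter_mem (S := {X | IsPositiveCosetUnion deg X}) ?_
    (fun X hX Y hY => hX.inter hY) hS fun L hL => ?_
  · rintro _ ⟨A, P, hA, hP, hdeg, rfl⟩
    exact hasRationalSeries_finite_add hA hP hdeg
  · obtain ⟨a, t, ht, hind, rfl⟩ := hlin L hL
    refine ⟨{a}, AddSubmonoid.closure t, Set.finite_singleton a,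
      (AddSubmonoid.fg_iff _).2 ⟨t, rfl, ht⟩, fun m hm => ?_, Set.singleton_add.symm⟩
    exact eq_zero_of_finite_inter_fiber hind ((hfin _).subset
      (Set.inter_subset_inter_left _ (Set.subset_sUnion_of_mem hL))) hm

end Semilinear

/-! ### Labels of paths in a finite graph -/

section PathLabel

open Pointwise

variable {M Q : Type*} [AddCommMonoid M]

/-- `IsPathLabel E V p q m` says that `m` is the sum of the labels along a path from `p` to `q`
all of whose intermediate vertices lie in `V`, in the graph on `Q` whose edges from `p` to `q` are
labelled by the elements of `E p q`. -/
inductive IsPathLabel (E : Q → Q → Set M) (V : Set Q) : Q → Q → M → Prop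
  | refl (p : Q) : IsPathLabel E V p p 0
  | edge {p q : Q} {m : M} : m ∈ E p q → IsPathLabel E V p q m
  | cons {p v q : Q} {m m' : M} : m ∈ E p v → v ∈ V → IsPathLabel E V v q m' →
      IsPathLabel E V p q (m + m')

namespace IsPathLabel

variable {E : Q → Q → Set M} {V W : Set Q} {p q v : Q}

theorem mono (hVW : V ⊆ W) {m : M} (h : IsPathLabel E V p q m) : IsPathLabel E W p q m := by
  induction h with
  | refl p => exact refl p
  | edge hm => exact edge hm
  | cons hm hv _ ih => exact cons hm (hVW hv) ih

theorem trans (hv : v ∈ V) {m m' : M} (h : IsPathLabel E V p v m) (h' : IsPathLabel E V v q m') :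
    IsPathLabel E V p q (m + m') := by
  induction h with
  | refl p => rwa [zero_add]
  | edge hm => exact cons hm hv h'
  | cons hm hu _ ih => exact add_assoc _ _ m' ▸ cons hm hu (ih hv h')

theorem of_mem_closure_loops (hv : v ∈ V) {m : M}
    (hm : m ∈ AddSubmonoid.closure {m | IsPathLabel E V v v m}) : IsPathLabel E V v v m := by
  induction hm using AddSubmonoid.closure_induction with
  | mem _ hm => exact hm
  | zero => exact refl v
  | add m m' _ _ ih ih' => exact trans hv ih ih'

/-- Kleene's elimination of the vertex `v`: a path through `insert v V` either avoids `v` or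
decomposes into a path to `v`, loops at `v`, and a path from `v`, all of them through `V`. -/
theorem setOf_insert (E : Q → Q → Set M) (V : Set Q) (p q v : Q) :
    {m | IsPathLabel E (insert v V) p q m} = {m | IsPathLabel E V p q m} ∪
      ({m | IsPathLabel E V p v m} + AddSubmonoid.closure {m | IsPathLabel E V v v m} +
        {m | IsPathLabel E V v q m}) := by
  have hV : V ⊆ insert v V := Set.subset_insert v V
  have hv : v ∈ insert v V := Set.mem_insert v V
  ext m
  constructor
  · intro h
    induction h with
    | refl p => exact Or.inl (refl p)
    | edge hm => exact Or.inl (edge hm)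
    | cons hm hu _ ih =>
      rcases hu with rfl | hu <;> rcases ih with h | ⟨_, ⟨a, ha, b, hb, rfl⟩, c, hc, rfl⟩
      · exact Or.inr ⟨_, ⟨_, edge hm, 0, zero_mem _, rfl⟩, _, h, by simp only [add_zero]⟩
      · have hab := add_mem (AddSubmonoid.subset_closure ha) hb
        exact Or.inr ⟨_, ⟨_, edge hm, _, hab, rfl⟩, c, hc, by simp only [add_assoc]⟩
      · exact Or.inl (cons hm hu h)
      · exact Or.inr ⟨_, ⟨_, cons hm hu ha, b, hb, rfl⟩, c, hc, by simp only [add_assoc]⟩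
  · rintro (h | ⟨_, ⟨a, ha, b, hb, rfl⟩, c, hc, rfl⟩)
    · exact h.mono hV
    · have hb' : IsPathLabel E (insert v V) v v b :=
        of_mem_closure_loops hv (AddSubmonoid.closure_mono (fun m hm => hm.mono hV) hb)
      exact trans hv (trans hv (ha.mono hV) hb') (hc.mono hV)

end IsPathLabel

theorem isSemilinearSet_setOf_isPathLabel [Finite Q] {E : Q → Q → Set M}
    (hE : ∀ p q, IsSemilinearSet (E p q)) (V : Set Q) (p q : Q) :
    IsSemilinearSet {m | IsPathLabel E V p q m} := by
  induction V, V.toFinite using Set.Finite.induction_on generalizing p q with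
  | empty =>
    have h0 : {m | IsPathLabel E ∅ p q m} = {m | p = q ∧ m = 0} ∪ E p q := by
      ext m
      constructor
      · rintro (_ | hm | ⟨-, ⟨⟩, -⟩)
        exacts [Or.inl ⟨rfl, rfl⟩, Or.inr hm]
      · rintro (⟨rfl, rfl⟩ | hm)
        exacts [.refl p, .edge hm]
    rw [h0]
    exact (IsSemilinearSet.of_finite ((Set.finite_singleton 0).subset fun _ h => h.2)).union
      (hE p q)
  | @insert v V _ _ ih =>
    rw [IsPathLabel.setOf_insert]
    exact (ih p q).union (((ih p v).add (ih v v).closure).add (ih v q))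

end PathLabel

theorem isSemilinearSet_setOf_isLeast {K : Type*} [AddCommMonoid K] [IsCancelAdd K]
    {B : Set (K × ℕ)} (hB : IsSemilinearSet B) :
    IsSemilinearSet {m : K × ℕ | IsLeast {n | (m.1, n) ∈ B} m.2} := by
  have hpos : IsSemilinearSet (AddMonoidHom.inr K ℕ '' {0}ᶜ) :=
    (IsSemilinearSet.singleton 0).compl.image _
  convert hB.sdiff (hB.add hpos) using 1
  ext ⟨h, n⟩
  constructor
  · rintro ⟨hn, hmin⟩
    refine ⟨hn, ?_⟩
    rintro ⟨⟨h', k⟩, hk, _, ⟨d, hd, rfl⟩, heq⟩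
    obtain ⟨rfl, rfl⟩ : h' = h ∧ k + d = n := by simpa using heq
    exact hd (Nat.eq_zero_of_le_zero (Nat.le_of_add_le_add_left (hmin hk)))
  · rintro ⟨hn, hmin⟩
    refine ⟨hn, fun k hk => le_of_not_gt fun hkn => hmin ?_⟩
    exact ⟨(h, k), hk, _, ⟨n - k, (Nat.sub_pos_of_lt hkn).ne', rfl⟩, by
      simp [Nat.add_sub_of_le hkn.le]⟩

/-! ### Words and the Schreier graph -/

section Word

variable {G : Type*} [Group G] {S : Set G} {ω : G → ℕ}

/-- The weights of all words over `S` representing `g`, so that `wordWeight S ω g` is the least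
element of this set as soon as it is nonempty. -/
def wordWeights (S : Set G) (ω : G → ℕ) (g : G) : Set ℕ :=
  {n | ∃ l : List G, (∀ x ∈ l, x ∈ S) ∧ l.prod = g ∧ (l.map ω).sum = n}

theorem isLeast_wordWeight (hS : Submonoid.closure S = ⊤) (g : G) :
    IsLeast (wordWeights S ω g) (wordWeight S ω g) := by
  obtain ⟨l, hl, hlg⟩ := Submonoid.exists_list_of_mem_closure (hS ▸ Submonoid.mem_top g)
  exact isLeast_csInf ⟨_, l, hl, hlg, rfl⟩

theorem finite_setOf_wordWeight_eq (hfin : S.Finite) (hS : Submonoid.closure S = ⊤)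
    (hω : ∀ s ∈ S, 0 < ω s) (k : ℕ) : {g | wordWeight S ω g = k}.Finite := by
  have := hfin.to_subtype
  refine ((List.finite_length_le S k).image fun l => (l.map Subtype.val).prod).subset ?_
  rintro g rfl
  obtain ⟨l, hl, hlg, hlω⟩ := (isLeast_wordWeight (ω := ω) hS g).1
  lift l to List S using hl
  refine ⟨l, ?_, hlg⟩
  simpa [← hlω] using List.length_le_sum_of_one_le ((l.map Subtype.val).map ω) fun n hn => by
    obtain ⟨s, hs, rfl⟩ := List.mem_map.1 hn
    obtain ⟨s, -, rfl⟩ := List.mem_map.1 hs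
    exact hω s s.2

end Word

section Schreier

open scoped IsMulCommutative

variable {G : Type*} [Group G] (H : Subgroup G) {S : Set G} {ω : G → ℕ}

/-- The cocycle `G × G ⧸ H → H` comparing `g` with the chosen representatives of the cosets `q` and
`g • q`. -/
noncomputable def schreierCocycle (g : G) (q : G ⧸ H) : H :=
  ⟨(g • q).out⁻¹ * g * q.out, by
    rw [mul_assoc, ← QuotientGroup.eq, QuotientGroup.out_eq', ← smul_eq_mul g,
      MulAction.Quotient.coe_smul_out]⟩

theorem schreierCocycle_one (q : G ⧸ H) : schreierCocycle H 1 q = 1 := by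
  ext
  simp [schreierCocycle]

theorem schreierCocycle_mul (g g' : G) (q : G ⧸ H) :
    schreierCocycle H (g * g') q = schreierCocycle H g (g' • q) * schreierCocycle H g' q := by
  ext
  simp [schreierCocycle, mul_smul, mul_assoc]

theorem smul_eq_and_schreierCocycle_eq_iff {g : G} {p q : G ⧸ H} {h : H} :
    g • q = p ∧ schreierCocycle H g q = h ↔ g = p.out * h * q.out⁻¹ := by
  constructor
  · rintro ⟨rfl, rfl⟩
    simp [schreierCocycle, mul_assoc]
  · rintro rfl
    have hp : (p.out * h * q.out⁻¹) • q = p := by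
      rw [← MulAction.Quotient.coe_smul_out, smul_eq_mul, inv_mul_cancel_right,
        QuotientGroup.mk_mul_of_mem _ h.2, QuotientGroup.out_eq']
    exact ⟨hp, Subtype.ext (by simp only [schreierCocycle, hp]; group)⟩

/-- The edge labels of the Schreier graph of `G ⧸ H`: left multiplication by `s ∈ S` gives an edge
between `q` and `s • q`, labelled by its cocycle and its weight. The edge points from `s • q` to
`q`, so that the letters of a word are met from left to right. -/
def schreierLabels (S : Set G) (ω : G → ℕ) (p q : G ⧸ H) : Set (Additive H × ℕ) :=
  {m | ∃ s ∈ S, s • q = p ∧ m = (Additive.ofMul (schreierCocycle H s q), ω s)}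

theorem isPathLabel_schreierLabels_iff [IsMulCommutative H] {p q : G ⧸ H} {m : Additive H × ℕ} :
    IsPathLabel (schreierLabels H S ω) Set.univ p q m ↔
      ∃ l : List G, (∀ x ∈ l, x ∈ S) ∧ l.prod • q = p ∧
        m = (Additive.ofMul (schreierCocycle H l.prod q), (l.map ω).sum) := by
  constructor
  · intro h
    induction h with
    | refl p => exact ⟨[], by simp [schreierCocycle_one, Prod.zero_eq_mk]⟩
    | edge hm =>
      obtain ⟨s, hs, rfl, rfl⟩ := hm
      exact ⟨[s], by simp [hs]⟩
    | cons hm _ _ ih =>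
      obtain ⟨s, hs, rfl, rfl⟩ := hm
      obtain ⟨l, hl, rfl, rfl⟩ := ih
      refine ⟨s :: l, List.forall_mem_cons.2 ⟨hs, hl⟩, ?_, ?_⟩
      · rw [List.prod_cons, mul_smul]
      · simp [schreierCocycle_mul]
  · rintro ⟨l, hl, rfl, rfl⟩
    induction l with
    | nil =>
      rw [List.prod_nil, one_smul, schreierCocycle_one]
      exact .refl q
    | cons s l ih =>
      obtain ⟨hs, hl⟩ := List.forall_mem_cons.1 hl
      rw [List.prod_cons, mul_smul, schreierCocycle_mul]
      have hedge : (Additive.ofMul (schreierCocycle H s (l.prod • q)), ω s) ∈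
          schreierLabels H S ω (s • l.prod • q) (l.prod • q) := ⟨s, hs, rfl, rfl⟩
      exact .cons hedge (Set.mem_univ _) (ih hl)

theorem isPathLabel_schreierLabels_iff_mem_wordWeights [IsMulCommutative H] {p q : G ⧸ H} {h : H}
    {n : ℕ} :
    IsPathLabel (schreierLabels H S ω) Set.univ p q (Additive.ofMul h, n) ↔
      n ∈ wordWeights S ω (p.out * h * q.out⁻¹) := by
  simp only [isPathLabel_schreierLabels_iff, wordWeights, Set.mem_ofPred_eq,
    ← smul_eq_and_schreierCocycle_eq_iff, Prod.mk.injEq, EmbeddingLike.apply_eq_iff_eq, and_assoc]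
  grind

theorem isSemilinearSet_schreierLabels [IsMulCommutative H] (hS : S.Finite) (p q : G ⧸ H) :
    IsSemilinearSet (schreierLabels H S ω p q) :=
  .of_finite <| (hS.image fun s => (Additive.ofMul (schreierCocycle H s q), ω s)).subset
    fun _ ⟨s, hs, _, hm⟩ => ⟨s, hs, hm.symm⟩

theorem isSemilinearSet_setOf_eq_wordWeight [H.FiniteIndex] [IsMulCommutative H]
    (hfin : S.Finite) (hS : Submonoid.closure S = ⊤) (p q : G ⧸ H) :
    IsSemilinearSet
      {m : Additive H × ℕ | m.2 = wordWeight S ω (p.out * m.1.toMul * q.out⁻¹)} := by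
  convert isSemilinearSet_setOf_isLeast (isSemilinearSet_setOf_isPathLabel
    (isSemilinearSet_schreierLabels (ω := ω) H hfin) Set.univ p q) using 1
  ext ⟨h, n⟩
  have hleast := isLeast_wordWeight (ω := ω) hS (p.out * h.toMul * q.out⁻¹)
  have hlabels : {k | IsPathLabel (schreierLabels H S ω) Set.univ p q (h, k)} =
      wordWeights S ω (p.out * h.toMul * q.out⁻¹) :=
    Set.ext fun _ => isPathLabel_schreierLabels_iff_mem_wordWeights H
  change n = _ ↔ IsLeast {k | IsPathLabel (schreierLabels H S ω) Set.univ p q (h, k)} n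
  rw [hlabels]
  exact ⟨fun hn => hn ▸ hleast, fun hn => hn.unique hleast⟩

theorem hasRationalSeries_wordWeight_setOf_smul_eq [H.FiniteIndex] [IsMulCommutative H]
    (hfin : S.Finite) (hS : Submonoid.closure S = ⊤) (hω : ∀ s ∈ S, 0 < ω s) (p q : G ⧸ H) :
    HasRationalSeries (wordWeight S ω) {g : G | g • q = p} := by
  let f : Additive H × ℕ → G := fun m => p.out * m.1.toMul * q.out⁻¹
  let Γ : Set (Additive H × ℕ) := {m | m.2 = wordWeight S ω (f m)}
  have hinj : Set.InjOn f Γ := by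
    rintro ⟨h, n⟩ hn ⟨h', n'⟩ hn' heq
    have hh : h = h' := by simpa [f] using heq
    exact Prod.ext hh (hn.trans (heq ▸ hn'.symm))
  have hΓfin (k : ℕ) : (Γ ∩ AddMonoidHom.snd (Additive H) ℕ ⁻¹' {k}).Finite := by
    refine .of_finite_image ((finite_setOf_wordWeight_eq hfin hS hω k).subset ?_)
      (hinj.mono Set.inter_subset_left)
    rintro _ ⟨m, ⟨hm, rfl⟩, rfl⟩
    exact hm.symm
  have himage : f '' Γ = {g | g • q = p} := by
    ext g
    constructor
    · rintro ⟨m, -, rfl⟩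
      exact ((smul_eq_and_schreierCocycle_eq_iff H).2 rfl).1
    · intro hg
      have hgf : g = f (Additive.ofMul (schreierCocycle H g q), wordWeight S ω g) :=
        (smul_eq_and_schreierCocycle_eq_iff H).1 ⟨hg, rfl⟩
      exact ⟨_, congrArg (wordWeight S ω) hgf, hgf.symm⟩
  rw [← himage]
  exact (hasRationalSeries_of_isSemilinearSet (isSemilinearSet_setOf_eq_wordWeight H hfin hS p q)
    hΓfin).image (d := 0) hinj fun m hm => hm.symm

theorem hasRationalSeries_wordWeight_univ [H.FiniteIndex] [IsMulCommutative H]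
    (hfin : S.Finite) (hS : Submonoid.closure S = ⊤) (hω : ∀ s ∈ S, 0 < ω s) :
    HasRationalSeries (wordWeight S ω) Set.univ := by
  let Z (p : G ⧸ H) : Set G := {g | g • ((1 : G) : G ⧸ H) = p}
  have hZ : ⋃ p, Z p = Set.univ := Set.iUnion_eq_univ_iff.2 fun g => ⟨_, rfl⟩
  rw [← hZ]
  exact .iUnion (fun p => hasRationalSeries_wordWeight_setOf_smul_eq H hfin hS hω p _)
    fun p p' hne => Set.disjoint_left.2 fun g hg hg' => hne (hg.symm.trans hg')

end Schreier

theorem standard_growth_series_rational_general {G : Type*} [Group G] (H : Subgroup G)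
    [H.FiniteIndex] [IsMulCommutative H] (S : Finset G)
    (hS : Submonoid.closure (S : Set G) = ⊤) (ω : G → ℕ) (hω : ∀ s ∈ S, 0 < ω s) :
    IsRationalSeries (PowerSeries.mk fun k =>
      (Nat.card {g : G // wordWeight (S : Set G) ω g = k} : ℤ)) := by
  have h := (hasRationalSeries_wordWeight_univ H S.finite_toSet hS hω).isRationalSeries
  simp only [weightSeries, Set.univ_inter] at h
  exact h

/-- The standard weighted growth series of a finitely generated virtually abelian group
is rational, for any finite weighted monoid generating set. -/
theorem standard_growth_series_rational {G : Type*} [Group G]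
    (n : ℕ) (N : Subgroup G) (hN : N.Normal) (hNfin : N.FiniteIndex)
    (hNiso : Nonempty (N ≃* Multiplicative (Fin n → ℤ)))
    (S : Finset G) (hS : Submonoid.closure (S : Set G) = ⊤)
    (ω : G → ℕ) (hω : ∀ s ∈ S, 0 < ω s) :
    IsRationalSeries (PowerSeries.mk fun k =>
      (Nat.card {g : G // wordWeight (S : Set G) ω g = k} : ℤ)) := by
  have : IsMulCommutative N := hNiso.elim fun e => ⟨⟨fun a b => e.injective (by simp [mul_comm])⟩⟩
  exact standard_growth_series_rational_general N S hS ω hω
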